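/- arXiv:1603.04542 — 2 statements merged into one kernel-verified Lean document; each statement's English description precedes it below -/
import Mathlib

section
/- Suppose there exists ε > 0 such that for every n ≥ 1, Σ_{j=0}^{n-1} r(j)² ≤ n^{1-ε}. Then the polynomial variation Q_{f_q,n}(Z) converges to λ_{f_q}(Z) = E[f_q(Z_0)] almost surely as n → ∞. -/
open MeasureTheory ProbabilityTheory Filter
open scoped NNReal ENNReal

noncomputable section

variable {Ω : Type*} [MeasureSpace Ω]

/-- `Z` is a centered stationary Gaussian sequence with covariance `r`. -/
def IsCSG (Z : ℤ → Ω → ℝ) (r : ℤ → ℝ) : Prop :=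
  (∀ k, Measurable (Z k)) ∧
  (∀ (s : Finset ℤ) (a : ℤ → ℝ), ∃ v : ℝ≥0,
    Measure.map (fun ω => ∑ k ∈ s, a k * Z k ω) (ℙ : Measure Ω) = gaussianReal 0 v) ∧
  (∀ j k : ℤ, ∫ ω, Z j ω * Z k ω = r (k - j)) ∧
  0 < r 0

/-- `m`-th probabilists' Hermite polynomial, as a function on `ℝ`. -/
def hermiteFun (m : ℕ) (x : ℝ) : ℝ := Polynomial.aeval x (Polynomial.hermite m)

/-- The polynomial `f_q(x) = ∑_{k=0}^{q/2} d_{2k} He_{2k}(x/√r0)`. -/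
def fpoly (r0 : ℝ) (d : ℕ → ℝ) (q : ℕ) (x : ℝ) : ℝ :=
  ∑ k ∈ Finset.range (q / 2 + 1), d (2 * k) * hermiteFun (2 * k) (x / Real.sqrt r0)

/-- Polynomial variation `Q_{f,n}(X)`. -/
def Qvar (f : ℝ → ℝ) (X : ℤ → Ω → ℝ) (n : ℕ) (ω : Ω) : ℝ :=
  (1 / (n : ℝ)) * ∑ i ∈ Finset.range n, f (X (i : ℤ) ω)

/-- `λ_f(X) = E[f(X_0)]`. -/
def lamE (f : ℝ → ℝ) (X : ℤ → Ω → ℝ) : ℝ := ∫ ω, f (X 0 ω)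

/-- `U_{f,n}(X) = √n (Q_{f,n}(X) − λ_f(X))`. -/
def Ustat (f : ℝ → ℝ) (X : ℤ → Ω → ℝ) (n : ℕ) (ω : Ω) : ℝ :=
  Real.sqrt n * (Qvar f X n ω - lamE f X)

/-- Variance of `U_{f,n}(X)`. -/
def varU (f : ℝ → ℝ) (X : ℤ → Ω → ℝ) (n : ℕ) : ℝ := ∫ ω, (Ustat f X n ω) ^ 2

/-- Standardized statistic `F_{f,n}(X)`. -/
def Fstat (f : ℝ → ℝ) (X : ℤ → Ω → ℝ) (n : ℕ) (ω : Ω) : ℝ :=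
  Ustat f X n ω / Real.sqrt (varU f X n)

/-- fourth cumulant `κ₄(X) = E[X⁴] − 3 (E[X²])²` of a centered random variable. -/
def kappa4 (X : Ω → ℝ) : ℝ := (∫ ω, X ω ^ 4) - 3 * (∫ ω, X ω ^ 2) ^ 2

/-- third cumulant `κ₃(X) = E[X³]`. -/
def kappa3 (X : Ω → ℝ) : ℝ := ∫ ω, X ω ^ 3

/-- `u_{f_q}(Z) = ∑_{k=1}^{q/2} d_{2k}² (2k)! ∑_{j∈ℤ} (r(j)/r(0))^{2k}`. -/
def ufq (r : ℤ → ℝ) (d : ℕ → ℝ) (q : ℕ) : ℝ :=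
  ∑ k ∈ Finset.Icc 1 (q / 2),
    (d (2 * k)) ^ 2 * (Nat.factorial (2 * k)) * ∑' j : ℤ, (r j / r 0) ^ (2 * k)

/-- Total variation distance between two laws on `ℝ`. -/
def dTV (μ ν : Measure ℝ) : ℝ :=
  ⨆ A : {A : Set ℝ // MeasurableSet A}, |(μ A.1).toReal - (ν A.1).toReal|

/-- Wasserstein distance between two laws on `ℝ`. -/
def dW (μ ν : Measure ℝ) : ℝ :=
  ⨆ f : {f : ℝ → ℝ // LipschitzWith 1 f}, |(∫ x, f.1 x ∂μ) - ∫ x, f.1 x ∂ν|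

/-- The quadratic function `f₂(x) = x²`. -/
def f2 : ℝ → ℝ := fun x => x ^ 2

/-- `U_{f₂,n}(X) = √n (Q_{f₂,n}(X) − r(0))`, quadratic case. -/
def U2 (X : ℤ → Ω → ℝ) (r0 : ℝ) (n : ℕ) (ω : Ω) : ℝ :=
  Real.sqrt n * (Qvar f2 X n ω - r0)

/-- Variance of `U_{f₂,n}`. -/
def varU2 (X : ℤ → Ω → ℝ) (r0 : ℝ) (n : ℕ) : ℝ := ∫ ω, (U2 X r0 n ω) ^ 2

/-- Standardized quadratic statistic `F_{f₂,n}`. -/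
def F2stat (X : ℤ → Ω → ℝ) (r0 : ℝ) (n : ℕ) (ω : Ω) : ℝ :=
  U2 X r0 n ω / Real.sqrt (varU2 X r0 n)

/-- `p`-th order finite difference of a sequence of processes. -/
def fdiff : ℕ → (ℤ → Ω → ℝ) → (ℤ → Ω → ℝ)
  | 0, Z => Z
  | (p + 1), Z => fun k ω => fdiff p Z (k + 1) ω - fdiff p Z k ω

/-! Regressing `Z j` on `Z i` writes `Z j = c Z i + W` with `c = r (j - i) / r 0` and `W`
independent of `Z i`. Replacing `f (Z j)` by `f (Z j) - f W` does not change the covariance with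
`f (Z i)`, and the difference is of order `|c|` in `L²`. Hence `|cov (f (Z i), f (Z j))|` is at most
a constant times `|r (j - i)|`, and the sum of the first `n` terms has variance `O(n ^ (2 - δ))`.
For `c > 1` the variances of the averages along `⌊c ^ n⌋` are summable, which gives almost sure
convergence along this subsequence; when `f ≥ 0` the partial sums are monotone, so convergence along
all these subsequences propagates to the whole sequence. A general `f` is the difference of its
positive and negative parts: this is why one works with pseudo-Lipschitz functions rather than with
polynomials. -/

section StrongLaw

variable {α : Type*} [MeasurableSpace α] {μ : Measure α}

lemma ae_tendsto_zero_of_summable_integral {g : ℕ → α → ℝ} (hg : ∀ n, Integrable (g n) μ)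
    (hg0 : ∀ n a, 0 ≤ g n a) (hsum : Summable fun n => ∫ a, g n a ∂μ) :
    ∀ᵐ a ∂μ, Tendsto (fun n => g n a) atTop (nhds 0) := by
  have hmeas : ∀ n, AEMeasurable (fun a => ENNReal.ofReal (g n a)) μ := fun n =>
    (hg n).aemeasurable.ennreal_ofReal
  have hfin : ∫⁻ a, ∑' n, ENNReal.ofReal (g n a) ∂μ ≠ ∞ := by
    rw [lintegral_tsum hmeas]
    simp_rw [← fun n => ofReal_integral_eq_lintegral_ofReal (hg n) (ae_of_all _ (hg0 n))]
    exact hsum.tsum_ofReal_ne_top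
  filter_upwards [ae_lt_top' (AEMeasurable.tsum hmeas) hfin] with a ha
  have h := ENNReal.tendsto_atTop_zero_of_tsum_ne_top ha.ne
  have h' := (ENNReal.tendsto_toReal ENNReal.zero_ne_top).comp h
  simpa [Function.comp_def, ENNReal.toReal_ofReal (hg0 _ a)] using h'

lemma ae_tendsto_of_summable_integral_sq_sub {g : ℕ → α → ℝ} {M : ℝ}
    (hg : ∀ n, Integrable (fun a => (g n a - M) ^ 2) μ)
    (hsum : Summable fun n => ∫ a, (g n a - M) ^ 2 ∂μ) :
    ∀ᵐ a ∂μ, Tendsto (fun n => g n a) atTop (nhds M) := by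
  filter_upwards [ae_tendsto_zero_of_summable_integral hg (fun _ _ => sq_nonneg _) hsum] with a ha
  have h := (Real.continuous_sqrt.tendsto 0).comp ha
  simp only [Function.comp_def, Real.sqrt_sq_eq_abs, Real.sqrt_zero] at h
  exact tendsto_sub_nhds_zero_iff.1 ((tendsto_zero_iff_abs_tendsto_zero _).2 h)

lemma summable_natFloor_pow_rpow_neg {c δ : ℝ} (hc : 1 < c) (hδ : 0 < δ) :
    Summable fun n : ℕ => (⌊c ^ n⌋₊ : ℝ) ^ (-δ) := by
  have hc0 : 0 < c := by linarith
  have h1 : 0 < 1 - c⁻¹ := sub_pos.2 (inv_lt_one_of_one_lt₀ hc)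
  have hgeom : Summable fun n : ℕ => (1 - c⁻¹) ^ (-δ) * (c ^ (-δ)) ^ n :=
    (summable_geometric_of_lt_one (by positivity)
      (Real.rpow_lt_one_of_one_lt_of_neg hc (by linarith))).mul_left _
  refine hgeom.of_nonneg_of_le (fun n => by positivity) fun n => ?_
  calc (⌊c ^ n⌋₊ : ℝ) ^ (-δ) ≤ ((1 - c⁻¹) * c ^ n) ^ (-δ) :=
        Real.rpow_le_rpow_of_nonpos (by positivity) (mul_pow_le_nat_floor_pow hc n) (by linarith)
    _ = (1 - c⁻¹) ^ (-δ) * (c ^ (-δ)) ^ n := by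
        rw [Real.mul_rpow h1.le (by positivity), ← Real.rpow_natCast_mul hc0.le,
          ← Real.rpow_mul_natCast hc0.le, mul_comm (n : ℝ)]

lemma integral_sq_div_sub_eq_variance_div {T : α → ℝ} {M x : ℝ} (hT : AEMeasurable T μ)
    (hmean : μ[T] = x * M) (hx : x ≠ 0) :
    ∫ a, (T a / x - M) ^ 2 ∂μ = Var[T; μ] / x ^ 2 := by
  rw [variance_eq_integral hT, hmean, ← integral_div]
  congr with a
  field_simp

lemma ae_tendsto_div_of_monotone_of_variance_le [IsFiniteMeasure μ] {T : ℕ → α → ℝ} {M K δ : ℝ}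
    (hmono : ∀ a, Monotone fun n => T n a) (hT : ∀ n, MemLp (T n) 2 μ)
    (hmean : ∀ n : ℕ, μ[T n] = n * M) (hδ : 0 < δ)
    (hvar : ∀ n : ℕ, 1 ≤ n → Var[T n; μ] ≤ K * (n : ℝ) ^ (2 - δ)) :
    ∀ᵐ a ∂μ, Tendsto (fun n : ℕ => T n a / n) atTop (nhds M) := by
  have hint : ∀ n : ℕ, Integrable (fun a => (T n a / n - M) ^ 2) μ := fun n =>
    (((hT n).mul_const (n : ℝ)⁻¹).sub (memLp_const M)).integrable_sq
  have hle : ∀ n : ℕ, 1 ≤ n → ∫ a, (T n a / n - M) ^ 2 ∂μ ≤ K * (n : ℝ) ^ (-δ) := by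
    intro n hn
    have hn0 : (0 : ℝ) < n := by exact_mod_cast hn
    rw [integral_sq_div_sub_eq_variance_div (hT n).aemeasurable (hmean n) hn0.ne',
      div_le_iff₀ (by positivity), mul_assoc, ← Real.rpow_natCast, ← Real.rpow_add hn0,
      neg_add_eq_sub]
    exact hvar n hn
  have hsub : ∀ c : ℝ, 1 < c →
      ∀ᵐ a ∂μ, Tendsto (fun n : ℕ => T ⌊c ^ n⌋₊ a / ⌊c ^ n⌋₊) atTop (nhds M) := fun c hc =>
    ae_tendsto_of_summable_integral_sq_sub (fun n => hint ⌊c ^ n⌋₊)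
      (((summable_natFloor_pow_rpow_neg hc hδ).mul_left K).of_nonneg_of_le
        (fun n => integral_nonneg fun a => sq_nonneg _)
        fun n => hle _ (Nat.one_le_floor_iff _ |>.2 (one_le_pow₀ hc.le)))
  obtain ⟨c, -, hc, hlim⟩ := exists_seq_strictAnti_tendsto (1 : ℝ)
  filter_upwards [ae_all_iff.2 fun k => hsub _ (hc k)] with a ha
  exact tendsto_div_of_monotone_of_tendsto_div_floor_pow _ M (hmono a) c hc hlim ha

end StrongLaw

section Covariance

variable {α : Type*} [MeasurableSpace α] {μ : Measure α}

lemma abs_covariance_le_sqrt_variance_mul [IsFiniteMeasure μ] {X Y : α → ℝ} (hX : MemLp X 2 μ)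
    (hY : MemLp Y 2 μ) : |cov[X, Y; μ]| ≤ √(Var[X; μ]) * √(Var[Y; μ]) := by
  have hquad : ∀ t : ℝ, 0 ≤ Var[Y; μ] * (t * t) + 2 * cov[X, Y; μ] * t + Var[X; μ] := by
    intro t
    have h := variance_add hX (hY.const_smul t)
    rw [covariance_smul_right, variance_smul] at h
    linarith [variance_nonneg (X + t • Y) μ]
  have hdiscrim := discrim_le_zero hquad
  rw [discrim] at hdiscrim
  rw [← Real.sqrt_mul (variance_nonneg X μ)]
  exact Real.abs_le_sqrt (by linarith)

lemma variance_sum_range_le [IsFiniteMeasure μ] {X : ℕ → α → ℝ} (hX : ∀ i, MemLp (X i) 2 μ)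
    {γ : ℕ → ℝ} (hγ : ∀ k, 0 ≤ γ k) (hcov : ∀ i k, cov[X i, X (i + k); μ] ≤ γ k) (n : ℕ) :
    Var[∑ i ∈ Finset.range n, X i; μ] ≤ 2 * n * ∑ k ∈ Finset.range n, γ k := by
  induction n with
  | zero => simp
  | succ n ih =>
    have hS : MemLp (∑ i ∈ Finset.range n, X i) 2 μ := memLp_finsetSum' _ fun i _ => hX i
    have hlast : cov[∑ i ∈ Finset.range n, X i, X n; μ] ≤ ∑ k ∈ Finset.range n, γ (k + 1) := by
      rw [covariance_sum_left' (fun i _ => hX i) (hX n),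
        ← Finset.sum_range_reflect (fun k => γ (k + 1))]
      refine Finset.sum_le_sum fun i hi => ?_
      have hi := Finset.mem_range.1 hi
      convert! hcov i (n - i) using 2 <;> congr 1 <;> omega
    have hdiag : Var[X n; μ] ≤ γ 0 := by
      simpa [covariance_self (hX n).aemeasurable] using hcov n 0
    have hmono : ∑ k ∈ Finset.range n, γ k ≤ ∑ k ∈ Finset.range (n + 1), γ k := by
      rw [Finset.sum_range_succ]
      linarith [hγ n]
    have hstep : 2 * cov[∑ i ∈ Finset.range n, X i, X n; μ] + Var[X n; μ] ≤
        2 * ∑ k ∈ Finset.range (n + 1), γ k := by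
      rw [Finset.sum_range_succ']
      linarith [hγ 0]
    rw [Finset.sum_range_succ, variance_add hS (hX n)]
    calc _ ≤ 2 * n * ∑ k ∈ Finset.range n, γ k + 2 * ∑ k ∈ Finset.range (n + 1), γ k := by linarith
      _ ≤ 2 * n * ∑ k ∈ Finset.range (n + 1), γ k + 2 * ∑ k ∈ Finset.range (n + 1), γ k := by gcongr
      _ = 2 * (n + 1 : ℕ) * ∑ k ∈ Finset.range (n + 1), γ k := by push_cast; ring

end Covariance

/-- Pseudo-Lipschitz functions: the Lipschitz constant is allowed to grow polynomially. This class
contains the polynomials and, unlike them, is stable under taking positive parts. -/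
def IsPseudoLipschitz (f : ℝ → ℝ) : Prop :=
  ∃ (K : ℝ) (m : ℕ), 0 ≤ K ∧ ∀ x y, |f x - f y| ≤ K * |x - y| * (1 + |x| + |y|) ^ m

namespace IsPseudoLipschitz

variable {f g : ℝ → ℝ}

lemma add (hf : IsPseudoLipschitz f) (hg : IsPseudoLipschitz g) :
    IsPseudoLipschitz fun x => f x + g x := by
  obtain ⟨K, m, hK, hf⟩ := hf
  obtain ⟨L, l, hL, hg⟩ := hg
  refine ⟨K + L, max m l, by positivity, fun x y => ?_⟩
  have hone : 1 ≤ 1 + |x| + |y| := by linarith [abs_nonneg x, abs_nonneg y]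
  calc |f x + g x - (f y + g y)| ≤ |f x - f y| + |g x - g y| := by
        rw [add_sub_add_comm]
        exact abs_add_le _ _
    _ ≤ K * |x - y| * (1 + |x| + |y|) ^ max m l + L * |x - y| * (1 + |x| + |y|) ^ max m l := by
        refine add_le_add ((hf x y).trans ?_) ((hg x y).trans ?_) <;> gcongr <;> simp
    _ = (K + L) * |x - y| * (1 + |x| + |y|) ^ max m l := by ring

lemma const_mul (hf : IsPseudoLipschitz f) (a : ℝ) : IsPseudoLipschitz fun x => a * f x := by
  obtain ⟨K, m, hK, hf⟩ := hf
  refine ⟨|a| * K, m, by positivity, fun x y => ?_⟩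
  rw [← mul_sub, abs_mul, mul_assoc, mul_assoc, ← mul_assoc K]
  gcongr
  exact hf x y

lemma neg (hf : IsPseudoLipschitz f) : IsPseudoLipschitz fun x => -f x := by
  simpa using hf.const_mul (-1)

lemma max_zero (hf : IsPseudoLipschitz f) : IsPseudoLipschitz fun x => max (f x) 0 := by
  obtain ⟨K, m, hK, hf⟩ := hf
  exact ⟨K, m, hK, fun x y => (abs_max_sub_max_le_abs _ _ _).trans (hf x y)⟩

lemma pow (n : ℕ) : IsPseudoLipschitz fun x => x ^ n := by
  refine ⟨n, n - 1, n.cast_nonneg, fun x y => (abs_pow_sub_pow_le ..).trans ?_⟩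
  rw [mul_comm |x - y|]
  gcongr
  exact max_le (by linarith [abs_nonneg y]) (by linarith [abs_nonneg x])

lemma polynomial_eval (p : Polynomial ℝ) : IsPseudoLipschitz fun x => p.eval x := by
  induction p using Polynomial.induction_on' with
  | add p q hp hq => simpa using hp.add hq
  | monomial n a => simpa using (pow n).const_mul a

lemma continuous (hf : IsPseudoLipschitz f) : Continuous f := by
  obtain ⟨K, m, -, hf⟩ := hf
  refine continuous_iff_continuousAt.2 fun y => tendsto_iff_norm_sub_tendsto_zero.2 ?_
  have hbound : Continuous fun x => K * |x - y| * (1 + |x| + |y|) ^ m := by fun_prop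
  refine squeeze_zero (fun _ => norm_nonneg _) (fun x => hf x y) ?_
  simpa using hbound.tendsto y

lemma exists_abs_le (hf : IsPseudoLipschitz f) :
    ∃ (C : ℝ) (m : ℕ), ∀ x, |f x| ≤ C * (1 + |x|) ^ m := by
  obtain ⟨K, m, hK, hf⟩ := hf
  refine ⟨|f 0| + K, m + 1, fun x => ?_⟩
  have hone : 1 ≤ (1 + |x|) ^ (m + 1) := one_le_pow₀ (by linarith [abs_nonneg x])
  calc |f x| ≤ |f 0| + |f x - f 0| := by linarith [abs_sub_abs_le_abs_sub (f x) (f 0)]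
    _ ≤ |f 0| + K * |x| * (1 + |x|) ^ m := by simpa using hf x 0
    _ ≤ |f 0| * (1 + |x|) ^ (m + 1) + K * (1 + |x|) * (1 + |x|) ^ m := by
        gcongr
        · exact le_mul_of_one_le_right (abs_nonneg _) hone
        · linarith
    _ = (|f 0| + K) * (1 + |x|) ^ (m + 1) := by ring

lemma exists_sq_sub_le (hf : IsPseudoLipschitz f) :
    ∃ (C : ℝ) (m : ℕ), 0 ≤ C ∧ ∀ c x y, |c| ≤ 1 →
      (f y - f (y - c * x)) ^ 2 ≤ C * c ^ 2 * ((1 + |x|) ^ m + (1 + |y|) ^ m) := by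
  obtain ⟨K, m, hK, hf⟩ := hf
  set N := 2 * (m + 1) with hN
  refine ⟨(K * 2 ^ m) ^ 2 * 2 ^ (N - 1), N, by positivity, fun c x y hc => ?_⟩
  set s := (1 + |x|) + (1 + |y|)
  have hcx : |c * x| ≤ |x| := by
    rw [abs_mul]
    exact mul_le_of_le_one_left (abs_nonneg x) hc
  have hweight : 1 + |y| + |y - c * x| ≤ 2 * s := by
    linarith [abs_sub y (c * x), abs_nonneg x, abs_nonneg y]
  have hdiff : |f y - f (y - c * x)| ≤ K * 2 ^ m * |c| * s ^ (m + 1) :=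
    calc |f y - f (y - c * x)| ≤ K * |c * x| * (1 + |y| + |y - c * x|) ^ m := by
          simpa using hf y (y - c * x)
      _ ≤ K * (|c| * s) * (2 * s) ^ m := by
          rw [abs_mul]
          gcongr
          linarith [abs_nonneg y]
      _ = K * 2 ^ m * |c| * s ^ (m + 1) := by
          rw [mul_pow, pow_succ]
          ring
  calc (f y - f (y - c * x)) ^ 2 ≤ (K * 2 ^ m * |c| * s ^ (m + 1)) ^ 2 := by
        rw [← sq_abs]
        gcongr
    _ = (K * 2 ^ m) ^ 2 * c ^ 2 * s ^ N := by
        rw [mul_pow, mul_pow, sq_abs, hN]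
        ring
    _ ≤ (K * 2 ^ m) ^ 2 * c ^ 2 * (2 ^ (N - 1) * ((1 + |x|) ^ N + (1 + |y|) ^ N)) := by
        gcongr
        exact add_pow_le (by positivity) (by positivity) N
    _ = (K * 2 ^ m) ^ 2 * 2 ^ (N - 1) * c ^ 2 * ((1 + |x|) ^ N + (1 + |y|) ^ N) := by ring

end IsPseudoLipschitz

section GaussianPair

variable {α : Type*} [MeasurableSpace α] {μ : Measure α} {X Y : α → ℝ} {f g : ℝ → ℝ}

lemma integrable_one_add_abs_pow (hX : HasGaussianLaw X μ) (m : ℕ) :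
    Integrable (fun a => (1 + |X a|) ^ m) μ := by
  have := hX.isProbabilityMeasure
  have habs : MemLp (fun a => |X a|) m μ := (hX.memLp (ENNReal.natCast_ne_top m)).abs
  have h : MemLp (fun a => 1 + |X a|) m μ := (memLp_const (1 : ℝ)).add habs
  exact h.integrable_norm_pow'.congr (ae_of_all _ fun a => by
    simp [abs_of_nonneg (by positivity : 0 ≤ 1 + |X a|)])

lemma IsPseudoLipschitz.memLp_two_comp (hf : IsPseudoLipschitz f) (hX : HasGaussianLaw X μ) :
    MemLp (fun a => f (X a)) 2 μ := by
  have hXm := hX.aemeasurable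
  obtain ⟨C, m, hC⟩ := hf.exists_abs_le
  have hpow : MemLp (fun a => (1 + |X a|) ^ m) 2 μ := by
    rw [memLp_two_iff_integrable_sq (by fun_prop)]
    simpa only [← pow_mul] using integrable_one_add_abs_pow hX (m * 2)
  refine hpow.of_le_mul (c := C)
    (hf.continuous.measurable.comp_aemeasurable hXm).aestronglyMeasurable (ae_of_all _ fun a => ?_)
  rw [Real.norm_eq_abs, Real.norm_of_nonneg (by positivity)]
  exact hC (X a)

lemma IsPseudoLipschitz.exists_variance_sub_le (hg : IsPseudoLipschitz g) (ν : Measure ℝ)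
    [IsGaussian ν] :
    ∃ C, 0 ≤ C ∧ ∀ {X Y : α → ℝ}, HasLaw X ν μ → HasLaw Y ν μ → ∀ c : ℝ, |c| ≤ 1 →
      Var[fun a => g (Y a) - g (Y a - c * X a); μ] ≤ C * c ^ 2 := by
  obtain ⟨C, m, hC, hsq⟩ := hg.exists_sq_sub_le
  refine ⟨C * (2 * ∫ x, (1 + |x|) ^ m ∂ν), by positivity, fun {X Y} hX hY c hc => ?_⟩
  have := hX.isProbabilityMeasure
  have hXm := hX.aemeasurable
  have hYm := hY.aemeasurable
  have hgm := hg.continuous.measurable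
  have hmoment : ∀ {V : α → ℝ}, HasLaw V ν μ →
      ∫ a, (1 + |V a|) ^ m ∂μ = ∫ x, (1 + |x|) ^ m ∂ν := fun hV =>
    hV.integral_comp (f := fun x => (1 + |x|) ^ m) (by fun_prop)
  have hXint := integrable_one_add_abs_pow hX.hasGaussianLaw m
  have hYint := integrable_one_add_abs_pow hY.hasGaussianLaw m
  calc Var[fun a => g (Y a) - g (Y a - c * X a); μ]
      ≤ ∫ a, (g (Y a) - g (Y a - c * X a)) ^ 2 ∂μ :=
        variance_le_expectation_sq (by fun_prop)
    _ ≤ ∫ a, C * c ^ 2 * ((1 + |X a|) ^ m + (1 + |Y a|) ^ m) ∂μ :=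
        integral_mono_of_nonneg (ae_of_all _ fun a => sq_nonneg _)
          ((hXint.add hYint).const_mul _) (ae_of_all _ fun a => hsq c (X a) (Y a) hc)
    _ = C * (2 * ∫ x, (1 + |x|) ^ m ∂ν) * c ^ 2 := by
        rw [integral_const_mul, integral_add hXint hYint, hmoment hX, hmoment hY]
        ring

lemma hasGaussianLaw_prodMk_sub_const_mul (hXY : HasGaussianLaw (fun a => (X a, Y a)) μ) (c : ℝ) :
    HasGaussianLaw (fun a => (X a, Y a - c * X a)) μ :=
  hXY.map_fun ((ContinuousLinearMap.fst ℝ ℝ ℝ).prod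
    (ContinuousLinearMap.snd ℝ ℝ ℝ - c • ContinuousLinearMap.fst ℝ ℝ ℝ))

lemma indepFun_regression_residual (hXY : HasGaussianLaw (fun a => (X a, Y a)) μ)
    (hvar : Var[X; μ] ≠ 0) :
    IndepFun X (fun a => Y a - cov[X, Y; μ] / Var[X; μ] * X a) μ := by
  have := hXY.isProbabilityMeasure
  have hX := hXY.fst.memLp_two
  refine (hasGaussianLaw_prodMk_sub_const_mul hXY _).indepFun_of_covariance_eq_zero ?_
  rw [covariance_fun_sub_right hX hXY.snd.memLp_two (hX.const_mul _), covariance_const_mul_right,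
    covariance_self hX.aemeasurable, div_mul_cancel₀ _ hvar, sub_self]

theorem IsPseudoLipschitz.exists_abs_covariance_comp_le (hf : IsPseudoLipschitz f)
    (hg : IsPseudoLipschitz g) (ν : Measure ℝ) [IsGaussian ν] (hν : Var[id; ν] ≠ 0) :
    ∃ C, 0 ≤ C ∧ ∀ {X Y : α → ℝ}, HasGaussianLaw (fun a => (X a, Y a)) μ → HasLaw X ν μ →
      HasLaw Y ν μ → |cov[fun a => f (X a), fun a => g (Y a); μ]| ≤ C * |cov[X, Y; μ]| := by
  obtain ⟨C, hC, hvar⟩ := hg.exists_variance_sub_le (μ := μ) ν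
  refine ⟨√(Var[f; ν]) * √C / Var[id; ν], by have := variance_nonneg id ν; positivity,
    fun {X Y} hXY hX hY => ?_⟩
  have := hX.isProbabilityMeasure
  have hVarX : Var[X; μ] = Var[id; ν] := hX.variance_eq
  have hVarY : Var[Y; μ] = Var[id; ν] := hY.variance_eq
  set c := cov[X, Y; μ] / Var[id; ν] with hc
  have hc1 : |c| ≤ 1 := by
    have h := abs_covariance_le_sqrt_variance_mul hXY.fst.memLp_two hXY.snd.memLp_two
    rw [hVarX, hVarY, Real.mul_self_sqrt (variance_nonneg _ _)] at h
    rw [hc, abs_div, abs_of_nonneg (variance_nonneg _ _)]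
    exact div_le_one_of_le₀ h (variance_nonneg _ _)
  have hfX := hf.memLp_two_comp hXY.fst
  have hgY := hg.memLp_two_comp hXY.snd
  have hgW := hg.memLp_two_comp (hasGaussianLaw_prodMk_sub_const_mul hXY c).snd
  have hindep : cov[fun a => f (X a), fun a => g (Y a - c * X a); μ] = 0 := by
    have h := indepFun_regression_residual hXY (hVarX ▸ hν)
    rw [hVarX] at h
    exact (h.comp hf.continuous.measurable hg.continuous.measurable).covariance_eq_zero hfX hgW
  have hVarf : Var[fun a => f (X a); μ] = Var[f; ν] := by
    rw [← hX.map_eq, variance_map hf.continuous.aemeasurable hX.aemeasurable]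
    rfl
  calc |cov[fun a => f (X a), fun a => g (Y a); μ]|
      = |cov[fun a => f (X a), fun a => g (Y a) - g (Y a - c * X a); μ]| := by
        rw [covariance_fun_sub_right hfX hgY hgW, hindep, sub_zero]
    _ ≤ √(Var[f; ν]) * √(Var[fun a => g (Y a) - g (Y a - c * X a); μ]) :=
        hVarf ▸ abs_covariance_le_sqrt_variance_mul hfX (hgY.sub hgW)
    _ ≤ √(Var[f; ν]) * √(C * c ^ 2) := by
        gcongr
        exact hvar hX hY c hc1
    _ = √(Var[f; ν]) * √C / Var[id; ν] * |cov[X, Y; μ]| := by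
        rw [Real.sqrt_mul hC, Real.sqrt_sq_eq_abs, hc, abs_div, abs_of_nonneg (variance_nonneg _ _)]
        ring

end GaussianPair

namespace IsCSG

variable {Z : ℤ → Ω → ℝ} {r : ℤ → ℝ} {f : ℝ → ℝ}

lemma hasGaussianLaw_prodMk (hZ : IsCSG Z r) (i j : ℤ) :
    HasGaussianLaw (fun ω => (Z i ω, Z j ω)) (ℙ : Measure Ω) := by
  have hi := hZ.1 i
  have hj := hZ.1 j
  refine ⟨isGaussian_of_map_eq_gaussianReal fun L => ?_⟩
  obtain ⟨v, hv⟩ := hZ.2.1 {i, j} (Pi.single i (L (1, 0)) + Pi.single j (L (0, 1)))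
  refine ⟨0, v, ?_⟩
  rw [Measure.map_map (by fun_prop) (by fun_prop), ← hv]
  congr 1
  funext ω
  have hbasis : (Z i ω, Z j ω) = Z i ω • ((1, 0) : ℝ × ℝ) + Z j ω • ((0, 1) : ℝ × ℝ) := by simp
  rw [Function.comp_apply, hbasis, map_add, map_smul, map_smul, smul_eq_mul, smul_eq_mul]
  simp [Pi.single_apply, add_mul, Finset.sum_add_distrib]
  ring

lemma integral_eq_zero (hZ : IsCSG Z r) (k : ℤ) : ∫ ω, Z k ω = 0 := by
  obtain ⟨v, hv⟩ := hZ.2.1 {k} 1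
  have hlaw : HasLaw (Z k) (gaussianReal 0 v) (ℙ : Measure Ω) :=
    ⟨(hZ.1 k).aemeasurable, by simpa using hv⟩
  rw [hlaw.integral_eq, integral_id_gaussianReal]

lemma covariance_eq (hZ : IsCSG Z r) (i j : ℤ) : cov[Z i, Z j; ℙ] = r (j - i) := by
  have hlaw := hZ.hasGaussianLaw_prodMk i j
  have := hlaw.isProbabilityMeasure
  rw [covariance_eq_sub hlaw.fst.memLp_two hlaw.snd.memLp_two, hZ.integral_eq_zero, zero_mul,
    sub_zero]
  exact hZ.2.2.1 i j

lemma hasLaw (hZ : IsCSG Z r) (k : ℤ) :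
    HasLaw (Z k) (gaussianReal 0 (r 0).toNNReal) (ℙ : Measure Ω) := by
  refine ⟨(hZ.1 k).aemeasurable, ?_⟩
  rw [(hZ.hasGaussianLaw_prodMk k k).fst.map_eq_gaussianReal, hZ.integral_eq_zero,
    ← covariance_self (hZ.1 k).aemeasurable, hZ.covariance_eq, sub_self]

lemma memLp_two_comp (hZ : IsCSG Z r) (hf : IsPseudoLipschitz f) (k : ℤ) :
    MemLp (fun ω => f (Z k ω)) 2 (ℙ : Measure Ω) :=
  hf.memLp_two_comp (hZ.hasLaw k).hasGaussianLaw

lemma integral_comp_eq_lamE (hZ : IsCSG Z r) (hf : Measurable f) (k : ℤ) :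
    ∫ ω, f (Z k ω) = lamE f Z :=
  ((hZ.hasLaw k).integral_comp hf.aestronglyMeasurable).trans
    ((hZ.hasLaw 0).integral_comp hf.aestronglyMeasurable).symm

lemma exists_abs_covariance_comp_le (hZ : IsCSG Z r) (hf : IsPseudoLipschitz f) :
    ∃ C, 0 ≤ C ∧ ∀ i j : ℤ,
      |cov[fun ω => f (Z i ω), fun ω => f (Z j ω); ℙ]| ≤ C * |r (j - i)| := by
  have hν : Var[id; gaussianReal 0 (r 0).toNNReal] ≠ 0 := by
    simpa using hZ.2.2.2
  obtain ⟨C, hC, hcov⟩ := hf.exists_abs_covariance_comp_le (μ := (ℙ : Measure Ω)) hf _ hν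
  exact ⟨C, hC, fun i j =>
    hZ.covariance_eq i j ▸ hcov (hZ.hasGaussianLaw_prodMk i j) (hZ.hasLaw i) (hZ.hasLaw j)⟩

lemma exists_variance_sum_comp_le (hZ : IsCSG Z r) (hf : IsPseudoLipschitz f) :
    ∃ C, 0 ≤ C ∧ ∀ n : ℕ, Var[∑ i ∈ Finset.range n, fun ω => f (Z i ω); ℙ] ≤
      C * n * ∑ k ∈ Finset.range n, |r k| := by
  have := (hZ.hasLaw 0).isProbabilityMeasure
  obtain ⟨C, hC, hcov⟩ := hZ.exists_abs_covariance_comp_le hf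
  refine ⟨2 * C, by positivity, fun n => ?_⟩
  have h := variance_sum_range_le (fun i : ℕ => hZ.memLp_two_comp hf i) (γ := fun k => C * |r k|)
    (fun k => by positivity) (fun i k => (le_abs_self _).trans (by simpa using hcov i (i + k))) n
  rw [← Finset.mul_sum] at h
  linarith

lemma ae_tendsto_Qvar_of_nonneg (hZ : IsCSG Z r) (hf : IsPseudoLipschitz f) (hf0 : ∀ x, 0 ≤ f x)
    {K δ : ℝ} (hδ : 0 < δ)
    (hr : ∀ n : ℕ, 1 ≤ n → ∑ j ∈ Finset.range n, |r j| ≤ K * (n : ℝ) ^ (1 - δ)) :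
    ∀ᵐ ω ∂(ℙ : Measure Ω), Tendsto (fun n : ℕ => Qvar f Z n ω) atTop (nhds (lamE f Z)) := by
  have := (hZ.hasLaw 0).isProbabilityMeasure
  have hL2 : ∀ i : ℕ, MemLp (fun ω => f (Z i ω)) 2 (ℙ : Measure Ω) := fun i =>
    hZ.memLp_two_comp hf i
  obtain ⟨C, hC, hvar⟩ := hZ.exists_variance_sum_comp_le hf
  have hmono : ∀ ω, Monotone fun n : ℕ => (∑ i ∈ Finset.range n, fun ω => f (Z i ω)) ω :=
    fun ω => monotone_nat_of_le_succ fun n => by simp [Finset.sum_range_succ, hf0]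
  have hmean : ∀ n : ℕ, ∫ ω, (∑ i ∈ Finset.range n, fun ω => f (Z i ω)) ω = n * lamE f Z := by
    intro n
    simp only [Finset.sum_apply]
    rw [integral_finsetSum _ fun i _ => (hL2 i).integrable one_le_two]
    simp [hZ.integral_comp_eq_lamE hf.continuous.measurable]
  have hvar_rpow : ∀ n : ℕ, 1 ≤ n → Var[∑ i ∈ Finset.range n, fun ω => f (Z i ω); ℙ] ≤
      C * K * (n : ℝ) ^ (2 - δ) := by
    intro n hn
    have hn0 : (0 : ℝ) < n := by exact_mod_cast hn
    calc _ ≤ C * n * (K * (n : ℝ) ^ (1 - δ)) := (hvar n).trans (by gcongr; exact hr n hn)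
      _ = C * K * (n : ℝ) ^ (2 - δ) := by
          rw [show 2 - δ = 1 + (1 - δ) by ring, Real.rpow_add hn0, Real.rpow_one]
          ring
  filter_upwards [ae_tendsto_div_of_monotone_of_variance_le hmono
    (fun n => memLp_finsetSum' _ fun i _ => hL2 i) hmean hδ hvar_rpow] with ω hω
  simpa [Qvar, div_eq_inv_mul] using hω

end IsCSG

lemma sum_range_abs_le_rpow_of_sum_sq_le {a : ℕ → ℝ} {n : ℕ} {ε : ℝ} (hn : 1 ≤ n)
    (h : ∑ j ∈ Finset.range n, a j ^ 2 ≤ (n : ℝ) ^ (1 - ε)) :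
    ∑ j ∈ Finset.range n, |a j| ≤ (n : ℝ) ^ (1 - ε / 2) := by
  have hn0 : (0 : ℝ) < n := by exact_mod_cast hn
  refine le_of_sq_le_sq ?_ (by positivity)
  calc (∑ j ∈ Finset.range n, |a j|) ^ 2 ≤ n * ∑ j ∈ Finset.range n, a j ^ 2 := by
        simpa using sq_sum_le_card_mul_sum_sq (s := Finset.range n) (f := fun j => |a j|)
    _ ≤ n * (n : ℝ) ^ (1 - ε) := by gcongr
    _ = ((n : ℝ) ^ (1 - ε / 2)) ^ 2 := by
        rw [← Real.rpow_mul_natCast hn0.le,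
          show (1 - ε / 2) * (2 : ℕ) = 1 + (1 - ε) by push_cast; ring, Real.rpow_add hn0,
          Real.rpow_one]

lemma isPseudoLipschitz_fpoly (r0 : ℝ) (d : ℕ → ℝ) (q : ℕ) : IsPseudoLipschitz (fpoly r0 d q) := by
  let p : Polynomial ℝ := ∑ k ∈ Finset.range (q / 2 + 1), Polynomial.C (d (2 * k)) *
    ((Polynomial.hermite (2 * k)).map (Int.castRingHom ℝ)).comp
      (Polynomial.C (√r0)⁻¹ * Polynomial.X)
  have hp : fpoly r0 d q = fun x => p.eval x := by
    funext x
    simp [p, fpoly, hermiteFun, Polynomial.eval_finsetSum, Polynomial.aeval_def,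
      Polynomial.eval_map, div_eq_inv_mul]
  exact hp ▸ .polynomial_eval p

theorem statement_0_general {Z : ℤ → Ω → ℝ} {r : ℤ → ℝ} (hZ : IsCSG Z r) {f : ℝ → ℝ}
    (hf : IsPseudoLipschitz f) {K δ : ℝ} (hδ : 0 < δ)
    (hr : ∀ n : ℕ, 1 ≤ n → ∑ j ∈ Finset.range n, |r j| ≤ K * (n : ℝ) ^ (1 - δ)) :
    ∀ᵐ ω ∂(ℙ : Measure Ω), Tendsto (fun n : ℕ => Qvar f Z n ω) atTop (nhds (lamE f Z)) := by
  have := (hZ.hasLaw 0).isProbabilityMeasure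
  have hint : ∀ {g : ℝ → ℝ}, IsPseudoLipschitz g → Integrable (fun ω => g (Z 0 ω)) ℙ := fun hg =>
    (hZ.memLp_two_comp hg 0).integrable one_le_two
  have hlim : lamE f Z = lamE (fun x => max (f x) 0) Z - lamE (fun x => max (-f x) 0) Z := by
    rw [lamE, lamE, lamE, ← integral_sub (hint hf.max_zero) (hint hf.neg.max_zero)]
    simp only [max_zero_sub_max_neg_zero_eq_self]
  filter_upwards [hZ.ae_tendsto_Qvar_of_nonneg hf.max_zero (fun _ => le_max_right _ _) hδ hr,
    hZ.ae_tendsto_Qvar_of_nonneg hf.neg.max_zero (fun _ => le_max_right _ _) hδ hr] with ω hpos hneg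
  rw [hlim]
  refine (hpos.sub hneg).congr fun n => ?_
  simp only [Qvar, ← mul_sub, ← Finset.sum_sub_distrib, max_zero_sub_max_neg_zero_eq_self]

/-- strong consistency of the polynomial variation under the
summability condition `∑_{j<n} r(j)² ≤ n^{1-ε}`. -/
theorem statement_0
    {Ω : Type*} [MeasureSpace Ω] [IsProbabilityMeasure (ℙ : Measure Ω)]
    (Z : ℤ → Ω → ℝ) (r : ℤ → ℝ) (hZ : IsCSG Z r)
    (q : ℕ) (hq : 0 < q) (hqe : q % 2 = 0)
    (d : ℕ → ℝ) (hd : d q = r 0 ^ (q / 2))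
    (ε : ℝ) (hε : 0 < ε)
    (hbound : ∀ n : ℕ, 1 ≤ n → ∑ j ∈ Finset.range n, (r j) ^ 2 ≤ (n : ℝ) ^ ((1 : ℝ) - ε)) :
    ∀ᵐ ω ∂(ℙ : Measure Ω),
      Filter.Tendsto (fun n : ℕ => Qvar (fpoly (r 0) d q) Z n ω) Filter.atTop
        (nhds (lamE (fpoly (r 0) d q) Z)) := by
  exact statement_0_general hZ (isPseudoLipschitz_fpoly (r 0) d q) (half_pos hε) (K := 1)
    fun n hn => (sum_range_abs_le_rpow_of_sum_sq_le hn (hbound n hn)).trans_eq (one_mul _).symm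

end
end

section
/- There exists a constant C > 0 such that for every n ≥ 1, κ₄(F_{f₂,n}(Z)) ≤ C · (Σ_{|j|<n} |r(j)|^{4/3})³ / ( n · (E[U_{f₂,n}(Z)²])² ). -/
open MeasureTheory ProbabilityTheory Filter
open scoped NNReal ENNReal

noncomputable section

variable {Ω : Type*} [MeasureSpace Ω]

/- The variables `Z₀, …, Zₙ₋₁` form a Gaussian vector whose covariance matrix is the Toeplitz
matrix `A = (r (j - i))`. In an orthonormal eigenbasis of `A` its coordinates `Yᵢ` are independent
centered Gaussians whose variances are the eigenvalues `λᵢ`, so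
`∑ Zᵢ² - n r(0) = ∑ (Yᵢ² - λᵢ)` is a sum of independent centered variables. Fourth cumulants add
up, and `κ₄ (Yᵢ² - λᵢ) = 48 λᵢ⁴`, which gives the exact formula
`κ₄ (F_{f₂,n}) = 48 tr (A⁴) / (n E[U²])²`.
Since `A` is symmetric, `tr (A⁴)` is the squared Hilbert–Schmidt norm of `A²`, and Young's
inequality `‖a * b‖₂ ≤ ‖a‖_{4/3} ‖b‖_{4/3}` for the rows of `A` bounds it by
`n (∑_{|j| < n} |r j|^{4/3})³`. -/

/-! ### Moments of Gaussian laws -/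

section

open scoped Nat

lemma iteratedDeriv_succ_id_mul_zero {𝕜 : Type*} [NontriviallyNormedField 𝕜] {f : 𝕜 → 𝕜} {n : ℕ}
    (hf : ContDiffAt 𝕜 (n + 1 : ℕ) f 0) :
    iteratedDeriv (n + 1) (fun t => t * f t) 0 = (n + 1) * iteratedDeriv n f 0 := by
  rw [iteratedDeriv_fun_mul contDiffAt_fun_id hf, Finset.sum_eq_single 1]
  · simp [iteratedDeriv_fun_id_zero]
  · intro i _ hi
    simp [iteratedDeriv_fun_id_zero, hi]
  · simp

lemma integral_pow_add_two_gaussianReal (v : ℝ≥0) (n : ℕ) :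
    ∫ x, x ^ (n + 2) ∂gaussianReal 0 v = (n + 1) * v * ∫ x, x ^ n ∂gaussianReal 0 v := by
  let M : ℝ → ℝ := mgf (fun x => x) (gaussianReal 0 v)
  have hM : M = fun t => Real.exp (v * t ^ 2 / 2) := by
    simp [M, mgf_fun_id_gaussianReal]
  have hM_smooth (m : ℕ) : ContDiffAt ℝ m M 0 := by
    rw [hM]
    fun_prop
  have hM_deriv : deriv M = fun t => v * (t * M t) := by
    rw [hM]
    funext t
    have h_exponent : HasDerivAt (fun t : ℝ => v * t ^ 2 / 2) (v * t) t := by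
      simpa [mul_div_assoc] using ((hasDerivAt_pow 2 t).const_mul (v : ℝ)).div_const 2
    rw [h_exponent.exp.deriv]
    ring
  have hM_iteratedDeriv (m : ℕ) : iteratedDeriv m M 0 = ∫ x, x ^ m ∂gaussianReal 0 v :=
    iteratedDeriv_mgf_zero (by simp) m
  rw [← hM_iteratedDeriv, ← hM_iteratedDeriv, iteratedDeriv_succ', hM_deriv,
    iteratedDeriv_const_mul_field, iteratedDeriv_succ_id_mul_zero (hM_smooth _)]
  ring

-- For `k = 0` the truncated `2 * k - 1` is `0`, and `0‼ = 1`.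
lemma integral_even_pow_gaussianReal (v : ℝ≥0) (k : ℕ) :
    ∫ x, x ^ (2 * k) ∂gaussianReal 0 v = (2 * k - 1)‼ * (v : ℝ) ^ k := by
  induction k with
  | zero => simp
  | succ k ih =>
    rw [mul_add_one, integral_pow_add_two_gaussianReal, ih,
      show 2 * k + 2 - 1 = 2 * k + 1 from rfl, Nat.doubleFactorial_add_one]
    push_cast
    ring

lemma integrable_pow_gaussianReal (m : ℝ) (v : ℝ≥0) (k : ℕ) :
    Integrable (fun x : ℝ => x ^ k) (gaussianReal m v) :=
  integrable_pow_of_mem_interior_integrableExpSet (by simp) k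

lemma integral_sq_sub_pow_of_hasLaw_gaussianReal {α : Type*} {mα : MeasurableSpace α}
    {μ : Measure α} {Y : α → ℝ} {v : ℝ≥0} (hY : HasLaw Y (gaussianReal 0 v) μ) (m : ℕ) :
    ∫ a, (Y a ^ 2 - v) ^ m ∂μ =
      (∑ k ∈ Finset.range (m + 1), (-1) ^ (m - k) * m.choose k * (2 * k - 1)‼ : ℝ) *
        (v : ℝ) ^ m := by
  have h_law : ∫ a, (Y a ^ 2 - v) ^ m ∂μ = ∫ x, (x ^ 2 - v) ^ m ∂gaussianReal 0 v :=
    hY.integral_comp (f := fun x => (x ^ 2 - (v : ℝ)) ^ m) (by fun_prop)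
  have h_expand (x : ℝ) : (x ^ 2 - (v : ℝ)) ^ m =
      ∑ k ∈ Finset.range (m + 1), x ^ (2 * k) * ((-v) ^ (m - k) * m.choose k) := by
    simp_rw [sub_eq_add_neg, add_pow, ← pow_mul, mul_assoc]
  simp_rw [h_law, h_expand]
  rw [integral_finsetSum _ fun k _ => (integrable_pow_gaussianReal 0 v (2 * k)).mul_const _,
    Finset.sum_mul]
  refine Finset.sum_congr rfl fun k hk => ?_
  obtain ⟨j, rfl⟩ := Nat.exists_eq_add_of_le (Finset.mem_range_succ_iff.mp hk)
  rw [integral_mul_const, integral_even_pow_gaussianReal, Nat.add_sub_cancel_left, neg_pow]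
  ring

end

/-! ### Fourth cumulants -/

lemma integrable_pow_of_memLp_of_le {α : Type*} {mα : MeasurableSpace α} {μ : Measure α}
    [IsFiniteMeasure μ] {X : α → ℝ} {n k : ℕ} (hX : MemLp X n μ) (hk : k ≤ n) :
    Integrable (fun a => X a ^ k) μ := by
  have hXk : MemLp X k μ := hX.mono_exponent (by exact_mod_cast hk)
  exact hXk.integrable_norm_pow'.mono' (hX.aestronglyMeasurable.pow k) (by simp)

lemma memLp_sq_of_memLp_two_mul {α : Type*} {mα : MeasurableSpace α} {μ : Measure α}
    {X : α → ℝ} {p : ℝ≥0∞} (hX : MemLp X (2 * p) μ) : MemLp (fun a => X a ^ 2) p μ := by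
  have : ENNReal.HolderTriple (2 * p) (2 * p) p := ⟨by
    rw [ENNReal.mul_inv (by simp) (by simp), ← add_mul, ENNReal.inv_two_add_inv_two, one_mul]⟩
  simpa only [sq] using! hX.mul hX

lemma integral_add_pow_of_indepFun {α : Type*} {mα : MeasurableSpace α} {μ : Measure α}
    [IsFiniteMeasure μ] {X Y : α → ℝ} {n : ℕ} (hX : MemLp X n μ) (hY : MemLp Y n μ)
    (hXY : IndepFun X Y μ) :
    ∫ a, (X a + Y a) ^ n ∂μ =
      ∑ k ∈ Finset.range (n + 1), (∫ a, X a ^ k ∂μ) * (∫ a, Y a ^ (n - k) ∂μ) * n.choose k := by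
  have h_indep (k l : ℕ) : IndepFun (fun a => X a ^ k) (fun a => Y a ^ l) μ :=
    hXY.comp (measurable_id.pow_const k) (measurable_id.pow_const l)
  have h_int {k : ℕ} (hk : k ∈ Finset.range (n + 1)) :
      Integrable (fun a => X a ^ k * Y a ^ (n - k)) μ :=
    (h_indep k (n - k)).integrable_mul
      (integrable_pow_of_memLp_of_le hX (Finset.mem_range_succ_iff.mp hk))
      (integrable_pow_of_memLp_of_le hY (Nat.sub_le n k))
  simp_rw [add_pow]
  rw [integral_finsetSum _ fun k hk => (h_int hk).mul_const _]
  refine Finset.sum_congr rfl fun k _ => ?_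
  rw [integral_mul_const, (h_indep k (n - k)).integral_fun_mul_eq_mul_integral
    (hX.aestronglyMeasurable.pow k) (hY.aestronglyMeasurable.pow (n - k))]

lemma kappa4_const_mul (c : ℝ) (X : Ω → ℝ) :
    kappa4 (fun ω => c * X ω) = c ^ 4 * kappa4 X := by
  simp only [kappa4, mul_pow, integral_const_mul]
  ring

section

variable [IsProbabilityMeasure (ℙ : Measure Ω)]

lemma kappa4_add_of_indepFun {X Y : Ω → ℝ} (hX : MemLp X 4) (hY : MemLp Y 4)
    (hXY : IndepFun X Y) (hX0 : 𝔼[X] = 0) (hY0 : 𝔼[Y] = 0) :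
    kappa4 (X + Y) = kappa4 X + kappa4 Y := by
  have h_two : ∫ ω, (X ω + Y ω) ^ 2 = (∫ ω, X ω ^ 2) + ∫ ω, Y ω ^ 2 := by
    rw [integral_add_pow_of_indepFun (n := 2) (hX.mono_exponent (by norm_num))
      (hY.mono_exponent (by norm_num)) hXY]
    simp [Finset.sum_range_succ, hX0, add_comm]
  have h_four : ∫ ω, (X ω + Y ω) ^ 4 =
      (∫ ω, X ω ^ 4) + (∫ ω, X ω ^ 2) * (∫ ω, Y ω ^ 2) * 6 + ∫ ω, Y ω ^ 4 := by
    rw [integral_add_pow_of_indepFun (n := 4) hX hY hXY]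
    simp [Finset.sum_range_succ, hX0, hY0, Nat.choose, add_comm, add_left_comm,
      add_assoc]
  simp only [kappa4, Pi.add_apply, h_two, h_four]
  ring

lemma kappa4_sum_of_iIndepFun {ι : Type*} {X : ι → Ω → ℝ} (hX : ∀ i, MemLp (X i) 4)
    (h_indep : iIndepFun X) (hX0 : ∀ i, 𝔼[X i] = 0) (s : Finset ι) :
    kappa4 (∑ i ∈ s, X i) = ∑ i ∈ s, kappa4 (X i) := by
  classical
  induction s using Finset.induction_on with
  | empty => simp [kappa4]
  | insert i s hi ih =>
    have h_sum_mean : 𝔼[∑ j ∈ s, X j] = 0 := by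
      simp_rw [Finset.sum_apply]
      rw [integral_finsetSum _ fun j _ => (hX j).integrable (by norm_num)]
      exact Finset.sum_eq_zero fun j _ => hX0 j
    have h_sum_indep : IndepFun (X i) (∑ j ∈ s, X j) :=
      (h_indep.indepFun_finsetSum_of_notMem₀ (fun j => (hX j).aemeasurable) hi).symm
    rw [Finset.sum_insert hi, Finset.sum_insert hi, ← ih]
    exact kappa4_add_of_indepFun (hX i) (memLp_finsetSum' s fun j _ => hX j) h_sum_indep (hX0 i)
      h_sum_mean

end

section

variable {Y : Ω → ℝ} {v : ℝ≥0}

lemma integral_sq_sub_of_hasLaw_gaussianReal (hY : HasLaw Y (gaussianReal 0 v)) :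
    ∫ ω, (Y ω ^ 2 - v) = 0 := by
  simpa [Finset.sum_range_succ] using integral_sq_sub_pow_of_hasLaw_gaussianReal hY 1

lemma kappa4_sq_sub_of_hasLaw_gaussianReal (hY : HasLaw Y (gaussianReal 0 v)) :
    kappa4 (fun ω => Y ω ^ 2 - v) = 48 * (v : ℝ) ^ 4 := by
  have h_two : ∫ ω, (Y ω ^ 2 - v) ^ 2 = 2 * (v : ℝ) ^ 2 := by
    rw [integral_sq_sub_pow_of_hasLaw_gaussianReal hY]
    norm_num [Finset.sum_range_succ, Nat.doubleFactorial]
  have h_four : ∫ ω, (Y ω ^ 2 - v) ^ 4 = 60 * (v : ℝ) ^ 4 := by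
    rw [integral_sq_sub_pow_of_hasLaw_gaussianReal hY]
    norm_num [Finset.sum_range_succ, Nat.doubleFactorial, Nat.choose]
  rw [kappa4, h_two, h_four]
  ring

end

/-! ### Traces of matrix powers -/

lemma trace_pow_eq_sum_eigenvalues_pow {𝕜 ι : Type*} [RCLike 𝕜] [Fintype ι] [DecidableEq ι]
    {A : Matrix ι ι 𝕜} (hA : A.IsHermitian) (k : ℕ) :
    (A ^ k).trace = ∑ i, (hA.eigenvalues i : 𝕜) ^ k := by
  conv_lhs => rw [hA.spectral_theorem]
  rw [← map_pow, Unitary.conjStarAlgAut_apply, Matrix.trace_mul_cycle,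
    Unitary.coe_star_mul_self, Matrix.one_mul, Matrix.diagonal_pow, Matrix.trace_diagonal]
  rfl

section

variable {l m n : Type*} [Fintype m] {S : ℝ}

-- Hölder's inequality in the guise of Cauchy–Schwarz for
-- `|a b| = (|a|^(2/3) |b|^(2/3)) * (|a|^(1/3) |b|^(1/3))`; AM-GM on the second factor.
lemma sq_mul_apply_le_sum_mul (A : Matrix l m ℝ) (B : Matrix m n ℝ) {i : l} {k : n}
    (hA : ∑ j, |A i j| ^ (4 / 3 : ℝ) ≤ S) (hB : ∑ j, |B j k| ^ (4 / 3 : ℝ) ≤ S) :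
    ((A * B) i k) ^ 2 ≤ (∑ j, |A i j| ^ (4 / 3 : ℝ) * |B j k| ^ (4 / 3 : ℝ)) * S := by
  have h_sq_eq (x : ℝ) : |x| ^ (4 / 3 : ℝ) = (|x| ^ (2 / 3 : ℝ)) ^ 2 := by
    rw [← Real.rpow_mul_natCast (abs_nonneg x)]
    norm_num
  have h_split (x : ℝ) : x ^ 2 = |x| ^ (4 / 3 : ℝ) * |x| ^ (2 / 3 : ℝ) := by
    rw [← Real.rpow_add_of_nonneg (abs_nonneg x) (by norm_num) (by norm_num), ← sq_abs]
    norm_num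
  have h_amgm : ∑ j, |A i j| ^ (2 / 3 : ℝ) * |B j k| ^ (2 / 3 : ℝ) ≤ S := calc
    _ ≤ ∑ j, (|A i j| ^ (4 / 3 : ℝ) + |B j k| ^ (4 / 3 : ℝ)) / 2 := by
      gcongr with j
      rw [h_sq_eq, h_sq_eq]
      linarith [two_mul_le_add_sq (|A i j| ^ (2 / 3 : ℝ)) (|B j k| ^ (2 / 3 : ℝ))]
    _ = ((∑ j, |A i j| ^ (4 / 3 : ℝ)) + ∑ j, |B j k| ^ (4 / 3 : ℝ)) / 2 := by
      rw [← Finset.sum_div, Finset.sum_add_distrib]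
    _ ≤ S := by linarith
  rw [Matrix.mul_apply]
  calc (∑ j, A i j * B j k) ^ 2
    _ ≤ (∑ j, |A i j| ^ (4 / 3 : ℝ) * |B j k| ^ (4 / 3 : ℝ)) *
          ∑ j, |A i j| ^ (2 / 3 : ℝ) * |B j k| ^ (2 / 3 : ℝ) := by
      refine Finset.sum_sq_le_sum_mul_sum_of_sq_le_mul _ (fun j _ => by positivity)
        (fun j _ => by positivity) fun j _ => le_of_eq ?_
      rw [mul_pow, h_split (A i j), h_split (B j k)]
      ring
    _ ≤ (∑ j, |A i j| ^ (4 / 3 : ℝ) * |B j k| ^ (4 / 3 : ℝ)) * S := by gcongr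

lemma sum_sq_mul_apply_le [Fintype l] [Fintype n] {A : Matrix l m ℝ} {B : Matrix m n ℝ}
    (hA_row : ∀ i, ∑ j, |A i j| ^ (4 / 3 : ℝ) ≤ S) (hB_row : ∀ j, ∑ k, |B j k| ^ (4 / 3 : ℝ) ≤ S)
    (hB_col : ∀ k, ∑ j, |B j k| ^ (4 / 3 : ℝ) ≤ S) :
    ∑ i, ∑ k, ((A * B) i k) ^ 2 ≤ Fintype.card l * S ^ 3 := by
  have h_row (i : l) : ∑ k, ((A * B) i k) ^ 2 ≤ S ^ 3 := by
    have hS : 0 ≤ S := le_trans (by positivity) (hA_row i)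
    calc ∑ k, ((A * B) i k) ^ 2
      _ ≤ ∑ k, (∑ j, |A i j| ^ (4 / 3 : ℝ) * |B j k| ^ (4 / 3 : ℝ)) * S := by
        gcongr with k
        exact sq_mul_apply_le_sum_mul A B (hA_row i) (hB_col k)
      _ = (∑ j, |A i j| ^ (4 / 3 : ℝ) * ∑ k, |B j k| ^ (4 / 3 : ℝ)) * S := by
        simp_rw [← Finset.sum_mul, Finset.mul_sum]
        rw [Finset.sum_comm]
      _ ≤ (∑ j, |A i j| ^ (4 / 3 : ℝ) * S) * S := by
        gcongr with j
        exact hB_row j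
      _ ≤ S * S * S := by
        rw [← Finset.sum_mul]
        gcongr
        exact hA_row i
      _ = S ^ 3 := by ring
  calc ∑ i, ∑ k, ((A * B) i k) ^ 2 ≤ ∑ _i : l, S ^ 3 := Finset.sum_le_sum fun i _ => h_row i
    _ = Fintype.card l * S ^ 3 := by simp

lemma trace_mul_self_le (A : Matrix m m ℝ) : (A * A).trace ≤ ∑ i, ∑ j, A i j ^ 2 := calc
  (A * A).trace = ∑ i, ∑ j, A i j * A j i := by simp [Matrix.trace, Matrix.mul_apply]
  _ ≤ ∑ i, ∑ j, (A i j ^ 2 + A j i ^ 2) / 2 := by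
    gcongr with i _ j
    linarith [two_mul_le_add_sq (A i j) (A j i)]
  _ = ∑ i, ∑ j, A i j ^ 2 := by
    simp_rw [← Finset.sum_div, Finset.sum_add_distrib]
    rw [Finset.sum_comm (f := fun i j => A j i ^ 2), add_self_div_two]

lemma trace_pow_four_le [DecidableEq m] {A : Matrix m m ℝ}
    (h_row : ∀ i, ∑ j, |A i j| ^ (4 / 3 : ℝ) ≤ S) (h_col : ∀ j, ∑ i, |A i j| ^ (4 / 3 : ℝ) ≤ S) :
    (A ^ 4).trace ≤ Fintype.card m * S ^ 3 := calc
  (A ^ 4).trace = (A * A * (A * A)).trace := by rw [← sq, ← sq, ← pow_mul]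
  _ ≤ ∑ i, ∑ j, ((A * A) i j) ^ 2 := trace_mul_self_le (A * A)
  _ ≤ Fintype.card m * S ^ 3 := sum_sq_mul_apply_le h_row h_row h_col

end

/-- The `n × n` Toeplitz matrix with symbol `r`. -/
def toeplitz {R : Type*} (r : ℤ → R) (n : ℕ) : Matrix (Fin n) (Fin n) R :=
  .of fun i j => r (j - i)

lemma trace_toeplitz {R : Type*} [NonAssocSemiring R] (r : ℤ → R) (n : ℕ) :
    (toeplitz r n).trace = n * r 0 := by
  simp [toeplitz, Matrix.trace]

lemma sum_comp_le_sum_of_injective {ι κ M : Type*} [Fintype ι] [AddCommMonoid M] [PartialOrder M]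
    [IsOrderedAddMonoid M] {f : κ → M} (hf : 0 ≤ f) {g : ι → κ} (hg : g.Injective) {s : Finset κ}
    (hg_mem : ∀ i, g i ∈ s) : ∑ i, f (g i) ≤ ∑ j ∈ s, f j := by
  classical
  rw [← Finset.sum_image (g := g) hg.injOn]
  exact Finset.sum_le_sum_of_subset_of_nonneg
    (Finset.image_subset_iff.mpr fun i _ => hg_mem i) fun j _ _ => hf j

lemma trace_toeplitz_pow_four_le (r : ℤ → ℝ) (n : ℕ) :
    ((toeplitz r n) ^ 4).trace ≤
      n * (∑ j ∈ Finset.Ioo (-n : ℤ) n, |r j| ^ (4 / 3 : ℝ)) ^ 3 := by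
  have h_nonneg : 0 ≤ fun j => |r j| ^ (4 / 3 : ℝ) := fun j => by positivity
  have h_mem (i j : Fin n) : (j - i : ℤ) ∈ Finset.Ioo (-n : ℤ) n := by
    rw [Finset.mem_Ioo]
    omega
  simpa using trace_pow_four_le (A := toeplitz r n)
    (fun i => sum_comp_le_sum_of_injective h_nonneg (fun a b h => by grind) (h_mem i))
    (fun j => sum_comp_le_sum_of_injective h_nonneg (fun a b h => by grind) (h_mem · j))

/-! ### Principal components -/

section

variable {α ι : Type*} {mα : MeasurableSpace α} {P : Measure α} {X : ι → α → ℝ}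

/-- The matrix of covariances of the coordinates of the random vector `X`. -/
def covarianceMatrix (X : ι → α → ℝ) (P : Measure α) : Matrix ι ι ℝ :=
  .of fun i j => cov[X i, X j; P]

lemma covarianceMatrix_apply (X : ι → α → ℝ) (P : Measure α) (i j : ι) :
    covarianceMatrix X P i j = cov[X i, X j; P] := rfl

lemma isHermitian_covarianceMatrix (X : ι → α → ℝ) (P : Measure α) :
    (covarianceMatrix X P).IsHermitian :=
  Matrix.IsHermitian.ext fun _ _ => covariance_comm _ _

variable [Fintype ι] [DecidableEq ι]

/-- The coordinates of the random vector `X` in an orthonormal eigenbasis of its covariance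
matrix; they are uncorrelated, with the eigenvalues as variances. -/
def principalComponent (X : ι → α → ℝ) (P : Measure α) (i : ι) (a : α) : ℝ :=
  ∑ j, (isHermitian_covarianceMatrix X P).eigenvectorBasis i j * X j a

lemma sum_sq_principalComponent (X : ι → α → ℝ) (P : Measure α) (a : α) :
    ∑ i, principalComponent X P i a ^ 2 = ∑ i, X i a ^ 2 := by
  let x : EuclideanSpace ℝ ι := WithLp.toLp 2 (X · a)
  have h_parseval := (isHermitian_covarianceMatrix X P).eigenvectorBasis.sum_sq_norm_inner_right x
  simpa [x, principalComponent, PiLp.inner_apply, EuclideanSpace.real_norm_sq_eq, mul_comm]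
    using h_parseval

lemma covariance_principalComponent [IsFiniteMeasure P] (hX : ∀ i, MemLp (X i) 2 P) (i k : ι) :
    cov[principalComponent X P i, principalComponent X P k; P] =
      if i = k then (isHermitian_covarianceMatrix X P).eigenvalues i else 0 := by
  let hA := isHermitian_covarianceMatrix X P
  let u := hA.eigenvectorBasis
  calc cov[principalComponent X P i, principalComponent X P k; P]
    _ = ∑ a, u i a * ∑ b, covarianceMatrix X P a b * u k b := by
      unfold principalComponent
      rw [covariance_fun_sum_fun_sum (fun a => (hX a).const_mul _) fun b => (hX b).const_mul _]
      simp_rw [covariance_const_mul_left, covariance_const_mul_right, covarianceMatrix_apply,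
        Finset.mul_sum, mul_comm cov[_, _; P], u]
    _ = ∑ a, u i a * (hA.eigenvalues k * u k a) := by
      have h_eigen := hA.mulVec_eigenvectorBasis k
      refine Finset.sum_congr rfl fun a _ => ?_
      simpa [Matrix.mulVec, dotProduct, u] using congr_arg (u i a * · a) h_eigen
    _ = hA.eigenvalues k * inner ℝ (u i) (u k) := by
      simp [PiLp.inner_apply, Finset.mul_sum, mul_comm, mul_left_comm]
    _ = if i = k then hA.eigenvalues i else 0 := by
      rw [orthonormal_iff_ite.mp u.orthonormal, mul_ite, mul_one, mul_zero]
      split_ifs with h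
      · rw [h]
      · rfl

lemma integral_principalComponent (hX : ∀ i, Integrable (X i) P) (hX0 : ∀ i, P[X i] = 0) (i : ι) :
    P[principalComponent X P i] = 0 := by
  unfold principalComponent
  rw [integral_finsetSum _ fun j _ => (hX j).const_mul _]
  simp [integral_const_mul, hX0]

lemma hasGaussianLaw_principalComponent (hX : HasGaussianLaw (fun a i => X i a) P) :
    HasGaussianLaw (fun a i => principalComponent X P i a) P := by
  let u := (isHermitian_covarianceMatrix X P).eigenvectorBasis
  let coords := (Matrix.mulVecLin (.of fun i j => u i j)).toContinuousLinearMap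
  convert! hX.map_fun coords using 2

lemma iIndepFun_principalComponent (hX : HasGaussianLaw (fun a i => X i a) P) :
    iIndepFun (principalComponent X P) P := by
  have := hX.isProbabilityMeasure
  refine (hasGaussianLaw_principalComponent hX).iIndepFun_of_covariance_eq_zero fun i k hik => ?_
  exact (covariance_principalComponent (fun j => (hX.eval j).memLp_two) i k).trans (if_neg hik)

lemma hasLaw_principalComponent (hX : HasGaussianLaw (fun a i => X i a) P)
    (hX0 : ∀ i, P[X i] = 0) (i : ι) :
    HasLaw (principalComponent X P i)
      (gaussianReal 0 ((isHermitian_covarianceMatrix X P).eigenvalues i).toNNReal) P := by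
  have := hX.isProbabilityMeasure
  have hY := (hasGaussianLaw_principalComponent hX).eval i
  refine ⟨hY.aemeasurable, ?_⟩
  rw [hY.map_eq_gaussianReal, ← covariance_self hY.aemeasurable,
    covariance_principalComponent (fun j => (hX.eval j).memLp_two), if_pos rfl,
    integral_principalComponent (fun j => (hX.eval j).integrable) hX0]

lemma eigenvalues_covarianceMatrix_nonneg [IsFiniteMeasure P] (hX : ∀ i, MemLp (X i) 2 P) (i : ι) :
    0 ≤ (isHermitian_covarianceMatrix X P).eigenvalues i := by
  have h_cov := covariance_principalComponent hX i i
  rw [if_pos rfl] at h_cov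
  exact h_cov ▸ integral_nonneg fun _ => mul_self_nonneg _

end

lemma kappa4_sum_sq_sub_trace {ι : Type*} [Fintype ι]
    [DecidableEq ι] {X : ι → Ω → ℝ} (hX : HasGaussianLaw (fun ω i => X i ω) ℙ)
    (hX0 : ∀ i, 𝔼[X i] = 0) :
    kappa4 (fun ω => ∑ i, X i ω ^ 2 - (covarianceMatrix X ℙ).trace) =
      48 * ((covarianceMatrix X ℙ) ^ 4).trace := by
  have := hX.isProbabilityMeasure
  let hA := isHermitian_covarianceMatrix X ℙ
  let W (i : ι) (ω : Ω) : ℝ := principalComponent X ℙ i ω ^ 2 - hA.eigenvalues i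
  have h_coe (i : ι) : ((hA.eigenvalues i).toNNReal : ℝ) = hA.eigenvalues i :=
    Real.coe_toNNReal _ (eigenvalues_covarianceMatrix_nonneg (fun j => (hX.eval j).memLp_two) i)
  have h_law := hasLaw_principalComponent hX hX0
  have hW_memLp (i : ι) : MemLp (W i) 4 := by
    have h_gaussian := (hasGaussianLaw_principalComponent hX).eval i
    exact (memLp_sq_of_memLp_two_mul (h_gaussian.memLp (by finiteness))).sub (memLp_const _)
  have hW_indep : iIndepFun W :=
    (iIndepFun_principalComponent hX).comp (fun i x => x ^ 2 - hA.eigenvalues i)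
      fun i => by fun_prop
  have hW_mean (i : ι) : 𝔼[W i] = 0 := by
    simpa only [h_coe] using integral_sq_sub_of_hasLaw_gaussianReal (h_law i)
  have hW_kappa4 (i : ι) : kappa4 (W i) = 48 * hA.eigenvalues i ^ 4 := by
    simpa only [h_coe] using kappa4_sq_sub_of_hasLaw_gaussianReal (h_law i)
  have h_sum : (fun ω => ∑ i, X i ω ^ 2 - (covarianceMatrix X ℙ).trace) = ∑ i, W i := by
    funext ω
    simp [W, hA.trace_eq_sum_eigenvalues, sum_sq_principalComponent]
  rw [h_sum, kappa4_sum_of_iIndepFun hW_memLp hW_indep hW_mean, trace_pow_eq_sum_eigenvalues_pow hA,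
    Finset.mul_sum]
  exact Finset.sum_congr rfl fun i _ => hW_kappa4 i

/-! ### The quadratic variation -/

section

variable {Z : ℤ → Ω → ℝ} {r : ℤ → ℝ}

lemma IsCSG.integral_eq_zero_s3 (hZ : IsCSG Z r) (k : ℤ) : 𝔼[Z k] = 0 := by
  obtain ⟨v, hv⟩ := hZ.2.1 {k} 1
  have h_law : HasLaw (Z k) (gaussianReal 0 v) :=
    ⟨(hZ.1 k).aemeasurable, by simpa using hv⟩
  rw [h_law.integral_eq, integral_id_gaussianReal]

lemma IsCSG.hasGaussianLaw (hZ : IsCSG Z r) (n : ℕ) :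
    HasGaussianLaw (fun ω (i : Fin n) => Z i ω) ℙ where
  isGaussian_map := by
    refine isGaussian_of_map_eq_gaussianReal fun L => ⟨0, ?_⟩
    let a (k : ℤ) : ℝ := if h : k.toNat < n then L (Pi.single ⟨k.toNat, h⟩ 1) else 0
    have h_comb (ω : Ω) : L (fun i : Fin n => Z i ω) =
        ∑ k ∈ (Finset.range n).map Nat.castEmbedding, a k * Z k ω := calc
      L (fun i : Fin n => Z i ω) = ∑ i : Fin n, Z i ω * L (Pi.single i 1) := by
        conv_lhs => rw [pi_eq_sum_univ' fun i : Fin n => Z i ω, map_sum]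
        simp
      _ = ∑ k ∈ (Finset.range n).map Nat.castEmbedding, a k * Z k ω := by
        simp [a, Finset.sum_range, mul_comm]
    obtain ⟨v, hv⟩ := hZ.2.1 ((Finset.range n).map Nat.castEmbedding) a
    refine ⟨v, ?_⟩
    rw [Measure.map_map (by fun_prop) (measurable_pi_lambda _ fun i => hZ.1 _), ← hv]
    exact congr_arg (Measure.map · ℙ) (funext h_comb)

lemma IsCSG.covarianceMatrix_eq_toeplitz (hZ : IsCSG Z r) (n : ℕ) :
    covarianceMatrix (fun i : Fin n => Z i) ℙ = toeplitz r n := by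
  have hG := hZ.hasGaussianLaw n
  have := hG.isProbabilityMeasure
  ext i j
  rw [covarianceMatrix_apply, covariance_eq_sub (hG.eval i).memLp_two (hG.eval j).memLp_two,
    hZ.integral_eq_zero_s3, zero_mul, sub_zero]
  exact hZ.2.2.1 i j

lemma F2stat_eq_mul_sum_sq_sub (X : ℤ → Ω → ℝ) (r0 : ℝ) {n : ℕ} (ω : Ω) :
    F2stat X r0 n ω = (√(n * varU2 X r0 n))⁻¹ * (∑ i : Fin n, X i ω ^ 2 - n * r0) := by
  rcases n.eq_zero_or_pos with rfl | hn
  · simp [F2stat, U2]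
  simp only [F2stat, U2, Qvar, f2, Finset.sum_range]
  rw [Real.sqrt_mul n.cast_nonneg]
  field_simp
  rw [Real.sq_sqrt n.cast_nonneg]

lemma IsCSG.kappa4_F2stat (hZ : IsCSG Z r) (n : ℕ) :
    kappa4 (F2stat Z (r 0) n) =
      48 * ((toeplitz r n) ^ 4).trace / (n * varU2 Z (r 0) n) ^ 2 := by
  have h_var : 0 ≤ varU2 Z (r 0) n := integral_nonneg fun ω => sq_nonneg _
  have h_quadratic := kappa4_sum_sq_sub_trace (hZ.hasGaussianLaw n) fun i => hZ.integral_eq_zero_s3 i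
  rw [hZ.covarianceMatrix_eq_toeplitz, trace_toeplitz] at h_quadratic
  rw [funext (F2stat_eq_mul_sum_sq_sub Z (r 0)), kappa4_const_mul, h_quadratic, inv_pow,
    pow_mul _ 2 2, Real.sq_sqrt (by positivity), inv_mul_eq_div]

end

/-- quantitative bound on the fourth cumulant of the standardized
quadratic variation. -/
theorem statement_3
    {Ω : Type*} [MeasureSpace Ω] [IsProbabilityMeasure (ℙ : Measure Ω)]
    (Z : ℤ → Ω → ℝ) (r : ℤ → ℝ) (hZ : IsCSG Z r) :
    ∃ C > (0 : ℝ), ∀ n : ℕ, 1 ≤ n →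
      kappa4 (F2stat Z (r 0) n) ≤
        C * (∑ j ∈ Finset.Ioo (-(n : ℤ)) (n : ℤ), |r j| ^ ((4 : ℝ) / 3)) ^ 3 /
          ((n : ℝ) * (varU2 Z (r 0) n) ^ 2) := by
  refine ⟨48, by norm_num, fun n hn => ?_⟩
  let S := ∑ j ∈ Finset.Ioo (-(n : ℤ)) n, |r j| ^ (4 / 3 : ℝ)
  calc kappa4 (F2stat Z (r 0) n)
    _ = 48 * ((toeplitz r n) ^ 4).trace / (n * varU2 Z (r 0) n) ^ 2 := hZ.kappa4_F2stat n
    _ ≤ 48 * (n * S ^ 3) / (n * varU2 Z (r 0) n) ^ 2 := by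
      gcongr
      exact trace_toeplitz_pow_four_le r n
    _ = 48 * S ^ 3 / (n * varU2 Z (r 0) n ^ 2) := by
      field_simp

end
end
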